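/- For a stochastic matrix P over Ω and a state i ∈ Ω, the minimal projection p_i is reducing for Arv(P) if and only if there is no streamlined cycle through i in the directed graph of P, i.e., no cycle γ : {0,…,ℓ} → Ω with γ(0) = γ(ℓ) = i, ℓ ≥ 2, and γ(k) ≠ γ(k+1) for all k. -/

import Mathlib

/-- A stochastic matrix over a countable set `Ω`. -/
def IsStochastic {Ω : Type*} (P : Ω → Ω → ℝ) : Prop :=
  (∀ i j, 0 ≤ P i j) ∧ ∀ i, HasSum (fun j => P i j) 1

/-- Matrix product. -/
noncomputable def stochMul {Ω : Type*} (P Q : Ω → Ω → ℝ) : Ω → Ω → ℝ :=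
  fun i k => ∑' j, P i j * Q j k

-- Matrix powers `P^n`.
open Classical in
noncomputable def stochPow {Ω : Type*} (P : Ω → Ω → ℝ) : ℕ → Ω → Ω → ℝ
  | 0 => fun i j => if i = j then 1 else 0
  | n + 1 => stochMul (stochPow P n) P

/-- Membership in the `n`-th fiber of the Arveson–Stinespring subproduct system `Arv(P)` in its
standard presentation: matrices supported on the support of `P^n` with uniformly `ℓ²`-bounded
columns. -/
def InArvFiber {Ω : Type*} (P : Ω → Ω → ℝ) (n : ℕ) (A : Ω → Ω → ℂ) : Prop :=
  (∀ i j, ¬ 0 < stochPow P n i j → A i j = 0) ∧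
  ∃ C : ℝ, ∀ (j : Ω) (s : Finset Ω), ∑ i ∈ s, ‖A i j‖ ^ 2 ≤ C

open Classical in
/-- The subproduct multiplication maps of `Arv(P)` (on simple tensors):
`U_{n,m}(A ⊗ B) = (√(P^{n+m}))^♭ * [(√(P^n) * A) ⬝ (√(P^m) * B)]`, where `*` denotes Schur
(entrywise) product and `♭` the entrywise reciprocal on the support. -/
noncomputable def arvMul {Ω : Type*} (P : Ω → Ω → ℝ) (n m : ℕ) (A B : Ω → Ω → ℂ) :
    Ω → Ω → ℂ :=
  fun i k =>
    if 0 < stochPow P (n + m) i k then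
      (∑' j, ((Real.sqrt (stochPow P n i j) : ℂ) * A i j) *
        ((Real.sqrt (stochPow P m j k) : ℂ) * B j k)) / (Real.sqrt (stochPow P (n + m) i k) : ℂ)
    else 0

open Classical in
/-- The left compression `p A` of a matrix by the projection associated to `C ⊆ Ω`. -/
noncomputable def cutL {Ω : Type*} (C : Set Ω) (A : Ω → Ω → ℂ) : Ω → Ω → ℂ :=
  fun i j => if i ∈ C then A i j else 0

open Classical in
/-- The right compression `A p` of a matrix by the projection associated to `C ⊆ Ω`. -/
noncomputable def cutR {Ω : Type*} (C : Set Ω) (A : Ω → Ω → ℂ) : Ω → Ω → ℂ :=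
  fun i j => if j ∈ C then A i j else 0

/-- The projection `p = ∑_{i ∈ C} p_i` is reducing for `Arv(P)`; for the commutative algebra
`ℓ^∞(Ω)` this is equivalent to `U_{n,m}(p ξ (1-p) ⊗ (1-p) η p) = 0` for all fibers and all
`ξ, η`, which is the formulation used here. -/
def IsReducingSet {Ω : Type*} (P : Ω → Ω → ℝ) (C : Set Ω) : Prop :=
  ∀ (n m : ℕ) (A B : Ω → Ω → ℂ), InArvFiber P n A → InArvFiber P m B →
    arvMul P n m (cutR Cᶜ (cutL C A)) (cutR C (cutL Cᶜ B)) = 0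

/-!
A product `ξ ⊗ η` of elements of two fibers of `Arv(P)` involves no cancellation when `ξ` and `η`
are matrix units, so `p_C` fails to be reducing exactly when some `P`-path leaves `C` and comes
back to it. For `C = {i}` such a path is a cycle through `i` that visits another state, and erasing
the loops `j → j` from it leaves a streamlined cycle.
-/

section Relation

open Relation

variable {α : Type*} {r : α → α → Prop} {a b : α}

theorem transGen_iff_exists_path :
    TransGen r a b ↔
      ∃ (n : ℕ) (γ : ℕ → α), 0 < n ∧ γ 0 = a ∧ γ n = b ∧ ∀ k < n, r (γ k) (γ (k + 1)) := by
  constructor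
  · intro h
    induction h with
    | @single b hab => exact ⟨1, Function.update (fun _ => b) 0 a, by simp [hab]⟩
    | @tail b c _ hbc ih =>
      obtain ⟨n, γ, hn, h0, hγn, hstep⟩ := ih
      refine ⟨n + 1, Function.update γ (n + 1) c, n.succ_pos, by simpa using h0, by simp, ?_⟩
      intro k hk
      rcases Nat.lt_succ_iff_lt_or_eq.1 hk with hkn | rfl
      · simpa [hk.ne, hkn.ne] using hstep k hkn
      · simpa [hγn] using hbc
  · rintro ⟨n, γ, hn, rfl, rfl, hstep⟩
    exact (transGen_of_succ_of_lt (fun x y => r (γ x) (γ y)) (fun k hk => hstep k hk.2) hn).lift γ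
      fun _ _ h => h

theorem reflTransGen_and_ne : ReflTransGen (fun x y => r x y ∧ x ≠ y) = ReflTransGen r := by
  have reflGen_eq : ReflGen (fun x y => r x y ∧ x ≠ y) = ReflGen r := by
    ext x y
    by_cases hxy : x = y <;> simp [reflGen_iff, hxy, eq_comm]
  rw [← reflTransGen_reflGen, reflGen_eq, reflTransGen_reflGen]

theorem transGen_and_ne_self_iff :
    TransGen (fun x y => r x y ∧ x ≠ y) a a ↔
      ∃ b, b ≠ a ∧ ReflTransGen r a b ∧ ReflTransGen r b a := by
  rw [← reflTransGen_and_ne (r := r)]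
  constructor
  · intro h
    obtain ⟨b, hab, hba⟩ := TransGen.head'_iff.1 h
    exact ⟨b, hab.2.symm, .single hab, hba⟩
  · rintro ⟨b, hne, hab, hba⟩
    exact ((reflTransGen_iff_eq_or_transGen.1 hab).resolve_left hne).trans_left hba

theorem exists_streamlined_cycle_iff :
    (∃ (ℓ : ℕ) (γ : ℕ → α), 2 ≤ ℓ ∧ γ 0 = a ∧ γ ℓ = a ∧
        (∀ k < ℓ, r (γ k) (γ (k + 1))) ∧ ∀ k < ℓ, γ k ≠ γ (k + 1)) ↔
      ∃ b, b ≠ a ∧ ReflTransGen r a b ∧ ReflTransGen r b a := by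
  rw [← transGen_and_ne_self_iff, transGen_iff_exists_path]
  constructor
  · rintro ⟨ℓ, γ, hℓ, h0, h1, hr, hne⟩
    exact ⟨ℓ, γ, by omega, h0, h1, fun k hk => ⟨hr k hk, hne k hk⟩⟩
  · rintro ⟨ℓ, γ, hℓ, h0, h1, hstep⟩
    have ne_one : ℓ ≠ 1 := by
      rintro rfl
      exact (hstep 0 one_pos).2 (h0.trans h1.symm)
    exact ⟨ℓ, γ, by omega, h0, h1, fun k hk => (hstep k hk).1, fun k hk => (hstep k hk).2⟩

end Relation

section Powers

variable {Ω : Type*} {P Q : Ω → Ω → ℝ}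

/-- All series defining the entries of the powers of `P` converge, so that no entry of a
`stochPow P n` is the junk value `0` of a divergent `tsum`. -/
def PowersSummable (P : Ω → Ω → ℝ) : Prop :=
  ∀ (n : ℕ) (i k : Ω), Summable fun j => stochPow P n i j * P j k

theorem stochPow_nonneg (hP : ∀ i j, 0 ≤ P i j) (n : ℕ) (i j : Ω) : 0 ≤ stochPow P n i j := by
  induction n generalizing j with
  | zero => simp only [stochPow]; positivity
  | succ n ih => exact tsum_nonneg fun k => mul_nonneg (ih k) (hP k j)

theorem stochPow_zero_pos_iff {i j : Ω} : 0 < stochPow P 0 i j ↔ i = j := by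
  by_cases h : i = j <;> simp [stochPow, h]

theorem stochPow_succ_pos_iff (hP : ∀ i j, 0 ≤ P i j) (hsum : PowersSummable P) {n : ℕ}
    {i k : Ω} : 0 < stochPow P (n + 1) i k ↔ ∃ j, 0 < stochPow P n i j ∧ 0 < P j k := by
  constructor
  · intro h
    obtain ⟨j, hj⟩ : ∃ j, stochPow P n i j * P j k ≠ 0 := by
      by_contra! hzero
      exact h.ne' (by simp [stochPow, stochMul, hzero])
    exact ⟨j, (stochPow_nonneg hP n i j).lt_of_ne' (left_ne_zero_of_mul hj),
      (hP j k).lt_of_ne' (right_ne_zero_of_mul hj)⟩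
  · rintro ⟨j, hij, hjk⟩
    exact (hsum n i k).tsum_pos (fun l => mul_nonneg (stochPow_nonneg hP n i l) (hP l k)) j
      (mul_pos hij hjk)

theorem stochPow_add_pos (hP : ∀ i j, 0 ≤ P i j) (hsum : PowersSummable P) {n m : ℕ}
    {i j k : Ω} (hij : 0 < stochPow P n i j) (hjk : 0 < stochPow P m j k) :
    0 < stochPow P (n + m) i k := by
  induction m generalizing k with
  | zero => rwa [← stochPow_zero_pos_iff.1 hjk]
  | succ m ih =>
    obtain ⟨l, hjl, hlk⟩ := (stochPow_succ_pos_iff hP hsum).1 hjk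
    exact (stochPow_succ_pos_iff hP hsum).2 ⟨l, ih hjl, hlk⟩

theorem exists_stochPow_pos_iff (hP : ∀ i j, 0 ≤ P i j) (hsum : PowersSummable P) {i j : Ω} :
    (∃ n, 0 < stochPow P n i j) ↔ Relation.ReflTransGen (fun x y => 0 < P x y) i j := by
  constructor
  · rintro ⟨n, hn⟩
    induction n generalizing j with
    | zero => rw [stochPow_zero_pos_iff.1 hn]
    | succ n ih =>
      obtain ⟨k, hik, hkj⟩ := (stochPow_succ_pos_iff hP hsum).1 hn
      exact (ih hik).tail hkj
  · intro h
    induction h with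
    | refl => exact ⟨0, stochPow_zero_pos_iff.2 rfl⟩
    | tail _ hjk ih =>
      obtain ⟨n, hn⟩ := ih
      exact ⟨n + 1, (stochPow_succ_pos_iff hP hsum).2 ⟨_, hn, hjk⟩⟩

theorem IsStochastic.le_one (hP : IsStochastic P) (i j : Ω) : P i j ≤ 1 :=
  le_hasSum (hP.2 i) j fun k _ => hP.1 i k

theorem IsStochastic.stochMul (hP : IsStochastic P) (hQ : IsStochastic Q) :
    IsStochastic (stochMul P Q) := by
  refine ⟨fun i k => tsum_nonneg fun j => mul_nonneg (hP.1 i j) (hQ.1 j k), fun i => ?_⟩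
  have row_sum (j : Ω) : HasSum (fun k => P i j * Q j k) (P i j) := by
    simpa using (hQ.2 j).mul_left (P i j)
  have summable_prod : Summable fun x : Ω × Ω => P i x.1 * Q x.1 x.2 := by
    refine (summable_prod_of_nonneg fun x => mul_nonneg (hP.1 _ _) (hQ.1 _ _)).2
      ⟨fun j => (row_sum j).summable, ?_⟩
    simpa only [(row_sum _).tsum_eq] using (hP.2 i).summable
  have total : HasSum (fun x : Ω × Ω => P i x.1 * Q x.1 x.2) 1 := by
    rw [summable_prod.hasSum_iff, summable_prod.tsum_prod]
    simp only [(row_sum _).tsum_eq, (hP.2 i).tsum_eq]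
  exact ((Equiv.prodComm Ω Ω).hasSum_iff.2 total).prod_fiberwise fun k =>
    (summable_prod.prod_symm.prod_factor k).hasSum

theorem IsStochastic.stochPow (hP : IsStochastic P) (n : ℕ) : IsStochastic (stochPow P n) := by
  classical
  induction n with
  | zero =>
    refine ⟨fun i j => stochPow_nonneg hP.1 0 i j, fun i => ?_⟩
    simpa only [_root_.stochPow, eq_comm] using hasSum_ite_eq i (1 : ℝ)
  | succ n ih => exact ih.stochMul hP

theorem IsStochastic.powersSummable (hP : IsStochastic P) : PowersSummable P := fun n i k =>
  ((hP.stochPow n).2 i).summable.of_nonneg_of_le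
    (fun j => mul_nonneg ((hP.stochPow n).1 i j) (hP.1 j k))
    fun j => mul_le_of_le_one_right ((hP.stochPow n).1 i j) (hP.le_one j k)

end Powers

section Arveson

variable {Ω : Type*} {P : Ω → Ω → ℝ} {n m : ℕ} {A B : Ω → Ω → ℂ} {C D : Set Ω} {a b c : Ω}

theorem cutR_cutL_ne_zero_iff : cutR D (cutL C A) a b ≠ 0 ↔ a ∈ C ∧ b ∈ D ∧ A a b ≠ 0 := by
  by_cases ha : a ∈ C <;> by_cases hb : b ∈ D <;> simp [cutR, cutL, ha, hb]

theorem cutR_cutL_single [DecidableEq Ω] (ha : a ∈ C) (hb : b ∈ D) (z : ℂ) :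
    cutR D (cutL C (Matrix.single a b z)) = Matrix.single a b z := by
  ext x y
  by_cases hxy : a = x ∧ b = y
  · obtain ⟨rfl, rfl⟩ := hxy
    simp [cutR, cutL, ha, hb]
  · simp [cutR, cutL, hxy]

theorem inArvFiber_single [DecidableEq Ω] (h : 0 < stochPow P n a b) (z : ℂ) :
    InArvFiber P n (Matrix.single a b z) := by
  refine ⟨fun x y hxy => Matrix.single_apply_of_ne _ _ _ _ _ ?_, ‖z‖ ^ 2, fun y s => ?_⟩
  · rintro ⟨rfl, rfl⟩
    exact hxy h
  · calc ∑ x ∈ s, ‖Matrix.single a b z x y‖ ^ 2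
        ≤ ∑ x ∈ s, if a = x then ‖z‖ ^ 2 else 0 := by
          gcongr with x
          by_cases hx : a = x <;> by_cases hy : b = y <;> simp [hx, hy]
      _ ≤ ‖z‖ ^ 2 := by
          rw [Finset.sum_ite_eq]
          split_ifs <;> simp

theorem arvMul_single_apply_ne_zero [DecidableEq Ω] (hn : 0 < stochPow P n a b)
    (hm : 0 < stochPow P m b c) (hnm : 0 < stochPow P (n + m) a c) :
    arvMul P n m (Matrix.single a b 1) (Matrix.single b c 1) a c ≠ 0 := by
  have only_b (j : Ω) (hj : j ≠ b) :
      ((√(stochPow P n a j) : ℂ) * Matrix.single a b (1 : ℂ) a j) *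
        ((√(stochPow P m j c) : ℂ) * Matrix.single b c (1 : ℂ) j c) = 0 := by
    simp [hj.symm]
  simp only [arvMul, if_pos hnm, tsum_eq_single b only_b, Matrix.single_apply_same]
  simp [hn, hm, hnm, Real.sqrt_ne_zero']

theorem arvMul_eq_zero (h : ∀ a b c, A a b ≠ 0 → B b c = 0) : arvMul P n m A B = 0 := by
  ext a c
  have term_eq_zero (j : Ω) :
      ((√(stochPow P n a j) : ℂ) * A a j) * ((√(stochPow P m j c) : ℂ) * B j c) = 0 := by
    by_cases hA : A a j = 0
    · simp [hA]
    · simp [h a j c hA]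
  simp [arvMul, term_eq_zero]

theorem isReducingSet_iff_stochPow (hP : ∀ i j, 0 ≤ P i j) (hsum : PowersSummable P) :
    IsReducingSet P C ↔ ∀ ⦃n m a b c⦄, a ∈ C → c ∈ C →
      0 < stochPow P n a b → 0 < stochPow P m b c → b ∈ C := by
  classical
  constructor
  · intro hred n m a b c ha hc hab hbc
    by_contra hb
    have hzero := hred n m _ _ (inArvFiber_single hab 1) (inArvFiber_single hbc 1)
    rw [cutR_cutL_single ha hb, cutR_cutL_single (C := Cᶜ) hb hc] at hzero
    exact arvMul_single_apply_ne_zero hab hbc (stochPow_add_pos hP hsum hab hbc)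
      (congrFun₂ hzero a c)
  · intro hC n m A B hA hB
    refine arvMul_eq_zero fun a b c hAab => ?_
    by_contra hBbc
    obtain ⟨ha, hb, hab⟩ := cutR_cutL_ne_zero_iff.1 hAab
    obtain ⟨-, hc, hbc⟩ := cutR_cutL_ne_zero_iff.1 hBbc
    exact hb (hC ha hc (not_imp_comm.1 (hA.1 a b) hab) (not_imp_comm.1 (hB.1 b c) hbc))

theorem isReducingSet_iff_reflTransGen (hP : ∀ i j, 0 ≤ P i j) (hsum : PowersSummable P) :
    IsReducingSet P C ↔ ∀ ⦃a b c⦄, a ∈ C → c ∈ C →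
      Relation.ReflTransGen (fun x y => 0 < P x y) a b →
      Relation.ReflTransGen (fun x y => 0 < P x y) b c → b ∈ C := by
  simp only [isReducingSet_iff_stochPow hP hsum, ← exists_stochPow_pos_iff hP hsum]
  exact ⟨fun h a b c ha hc ⟨_, hab⟩ ⟨_, hbc⟩ => h ha hc hab hbc,
    fun h n m a b c ha hc hab hbc => h ha hc ⟨n, hab⟩ ⟨m, hbc⟩⟩

end Arveson

theorem isReducingSet_singleton_iff_no_streamlined_cycle_general {Ω : Type*} {P : Ω → Ω → ℝ}
    (hP : ∀ i j, 0 ≤ P i j) (hsum : PowersSummable P) (i : Ω) :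
    IsReducingSet P {i} ↔
      ¬ ∃ (ℓ : ℕ) (γ : ℕ → Ω), 2 ≤ ℓ ∧ γ 0 = i ∧ γ ℓ = i ∧
        (∀ k < ℓ, 0 < P (γ k) (γ (k + 1))) ∧ ∀ k < ℓ, γ k ≠ γ (k + 1) := by
  rw [isReducingSet_iff_reflTransGen hP hsum,
    exists_streamlined_cycle_iff (r := fun x y => 0 < P x y)]
  constructor
  · rintro hred ⟨j, hji, hreach, hback⟩
    exact hji (hred rfl rfl hreach hback)
  · rintro hcycle a b c rfl rfl hab hba
    by_contra hne
    exact hcycle ⟨b, hne, hab, hba⟩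

/-- the minimal projection `p_i` is reducing for `Arv(P)` if and only if there is
no streamlined cycle through `i` in the directed graph of `P`, i.e. no cycle
`γ : {0,…,ℓ} → Ω` with `γ 0 = γ ℓ = i`, `ℓ ≥ 2`, and `γ k ≠ γ (k+1)` for all `k`. -/
theorem isReducingSet_singleton_iff_no_streamlined_cycle {Ω : Type*} [Countable Ω]
    {P : Ω → Ω → ℝ} (hP : IsStochastic P) (i : Ω) :
    IsReducingSet P {i} ↔
      ¬ ∃ (ℓ : ℕ) (γ : ℕ → Ω), 2 ≤ ℓ ∧ γ 0 = i ∧ γ ℓ = i ∧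
        (∀ k < ℓ, 0 < P (γ k) (γ (k + 1))) ∧ ∀ k < ℓ, γ k ≠ γ (k + 1) :=
  isReducingSet_singleton_iff_no_streamlined_cycle_general hP.1 hP.powersSummable i
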